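/- arXiv:hep-lat/0504019 — 2 statements merged into one kernel-verified Lean document; each statement's English description precedes it below -/
import Mathlib

section
/- Let l be a natural number and let W : ℝ → Matrix (Fin 2) (Fin 2) ℂ be a matrix-valued function such that the function r ↦ r²·W(r) extends to a function analytic at r = 0 whose value at 0 is the zero matrix. Then for each i ∈ {1,2} there exist ε > 0 and a function h : ℝ → (Fin 2 → ℂ) analytic at 0 with h(0) = e_i (the i-th standard basis vector), such that the function u(r) = r^l · h(r) is twice differentiable on (0,ε) and satisfies the coupled radial Schrödinger system u''(r) + (2/r)·u'(r) − (l(l+1)/r²)·u(r) + W(r)·u(r) = 0 for all r ∈ (0,ε). In particular the system has two solutions u⁽¹⁾, u⁽²⁾ bounded near r = 0 with u⁽ⁱ⁾_j(r) ~ r^l δ_{ij} as r → 0⁺. -/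
/-!
Writing `u(r) = r ^ l • h(r)` and multiplying by `r ^ 2`, the system becomes the Fuchsian equation
`r² h'' + (2l + 2) r h' + W'(r) h = 0`, where `W' = r² W` is analytic with `W' 0 = 0`. Inserting
`h = ∑ rⁿ aₙ` and `W' = ∑_{k ≥ 1} rᵏ wₖ` gives the Frobenius recursion
`n (n + 2l + 1) aₙ = - ∑_{k = 1}^{n} wₖ aₙ₋ₖ`. The indicial factor `n (n + 2l + 1)` does not vanish
for `n ≥ 1`, so `a₀ = eᵢ` can be prescribed and determines the series (`frobCoeff`).

Since the factor is at least `n²` while the right-hand side has only `n` terms, a geometric bound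
on `wₖ` yields a geometric bound on `aₙ` (`norm_frobCoeff_le`). Hence the series converges near `0`,
may be differentiated termwise (`hasDerivAt_powSum`), and the recursion together with the Cauchy
product for `W' h` gives the equation for `h` (`frob_equation`).
-/

open Filter Topology Finset

/-! ### Power series with geometrically bounded coefficients -/

section PowerSeries

variable {E : Type*} [NormedAddCommGroup E] [NormedSpace ℝ E]

/-- The sum of the power series in a real variable with vector coefficients `c`
(zero where the series diverges). -/
noncomputable def powSum (c : ℕ → E) (r : ℝ) : E := ∑' n, r ^ n • c n

/-- The coefficients of the termwise derivative of a power series. -/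
def derivCoeff (c : ℕ → E) (n : ℕ) : E := ((n : ℝ) + 1) • c (n + 1)

lemma norm_derivCoeff_le {c : ℕ → E} {K M : ℝ} (_ : 0 < M)
    (hc : ∀ n, ‖c n‖ ≤ K * M ^ n) (n : ℕ) :
    ‖derivCoeff c n‖ ≤ (K * M) * (2 * M) ^ n := by
  have hK : 0 ≤ K := by simpa using (norm_nonneg _).trans (hc 0)
  have h2 : ((n : ℝ) + 1) ≤ 2 ^ n := by exact_mod_cast Nat.lt_two_pow_self (n := n)
  rw [derivCoeff, norm_smul, Real.norm_of_nonneg (by positivity)]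
  calc ((n : ℝ) + 1) * ‖c (n + 1)‖ ≤ 2 ^ n * (K * M ^ (n + 1)) := by
        gcongr
        exact hc _
    _ = _ := by rw [mul_pow, pow_succ]; ring

lemma summable_norm_powSum {c : ℕ → E} {K M r : ℝ} (hM : 0 < M)
    (hc : ∀ n, ‖c n‖ ≤ K * M ^ n) (hr : M * |r| < 1) :
    Summable fun n => ‖r ^ n • c n‖ := by
  refine Summable.of_nonneg_of_le (fun _ => norm_nonneg _) (fun n => ?_)
    ((summable_geometric_of_lt_one (by positivity) hr).mul_left K)
  rw [norm_smul, norm_pow, Real.norm_eq_abs, mul_pow]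
  calc |r| ^ n * ‖c n‖ ≤ |r| ^ n * (K * M ^ n) := by gcongr; exact hc n
    _ = _ := by ring

lemma hasSum_mul_deriv {c : ℕ → E} {r : ℝ} {s : E}
    (h : HasSum (fun n => r ^ n • derivCoeff c n) s) :
    HasSum (fun n : ℕ => (r ^ n * n) • c n) (r • s) := by
  rw [← hasSum_nat_add_iff' 1]
  convert h.const_smul r using 1
  · funext n
    rw [derivCoeff, smul_smul, smul_smul]
    push_cast
    congr 1
    ring
  · simp

lemma hasSum_sq_mul_deriv_deriv {c : ℕ → E} {r : ℝ} {s : E}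
    (h : HasSum (fun n => r ^ n • derivCoeff (derivCoeff c) n) s) :
    HasSum (fun n : ℕ => (r ^ n * (n * (n - 1))) • c n) (r ^ 2 • s) := by
  rw [← hasSum_nat_add_iff' 2]
  convert h.const_smul (r ^ 2) using 1
  · funext n
    rw [derivCoeff, derivCoeff, smul_smul, smul_smul, smul_smul]
    push_cast
    congr 1
    ring
  · simp [Finset.sum_range_succ]

/-- The bound on the coefficients holds for all large `ρ`, so that finitely many analytic functions
admit a common `ρ`. -/
lemma AnalyticAt.exists_coeff {f : ℝ → E} (hf : AnalyticAt ℝ f 0) :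
    ∃ w : ℕ → E, ∀ᶠ ρ : ℝ in atTop, (∀ n, ‖w n‖ ≤ ρ * ρ ^ n) ∧
      ∀ r : ℝ, ρ * |r| < 1 → HasSum (fun n => r ^ n • w n) (f r) := by
  obtain ⟨p, R, hp⟩ := hf
  obtain ⟨s, hs0, hsR⟩ := ENNReal.lt_iff_exists_nnreal_btwn.1 hp.r_pos
  have hs : (0 : ℝ) < s := by exact_mod_cast hs0
  obtain ⟨C, hC, hb⟩ := p.norm_mul_pow_le_of_lt_radius (hsR.trans_le hp.r_le)
  refine ⟨p.coeff, ?_⟩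
  filter_upwards [eventually_ge_atTop C, eventually_ge_atTop (1 / (s : ℝ))] with ρ h1 h2
  have hρ : 0 < ρ := hC.trans_le h1
  have hsρ : 1 ≤ ρ * s := by rwa [div_le_iff₀ hs] at h2
  refine ⟨fun n => ?_, fun r hr => ?_⟩
  · have h3 : ‖p.coeff n‖ ≤ ‖p n‖ :=
      ((p n).le_opNorm (1 : Fin n → ℝ)).trans (by simp)
    calc ‖p.coeff n‖ ≤ ‖p n‖ * (ρ * s) ^ n :=
          h3.trans (le_mul_of_one_le_right (norm_nonneg _) (one_le_pow₀ hsρ))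
      _ = (‖p n‖ * s ^ n) * ρ ^ n := by ring
      _ ≤ ρ * ρ ^ n := by gcongr; exact (hb n).trans h1
  · have hrs : ‖r‖ < s := by
      rw [Real.norm_eq_abs]
      by_contra! h
      nlinarith
    have := hp.hasSum (y := r) (by
      rw [mem_eball_zero_iff]
      refine lt_trans ?_ hsR
      rw [enorm_eq_nnnorm]
      exact_mod_cast hrs)
    simpa using this

variable [CompleteSpace E]

lemma hasSum_powSum {c : ℕ → E} {K M r : ℝ} (hM : 0 < M)
    (hc : ∀ n, ‖c n‖ ≤ K * M ^ n) (hr : M * |r| < 1) :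
    HasSum (fun n => r ^ n • c n) (powSum c r) :=
  (summable_norm_powSum hM hc hr).of_norm.hasSum

lemma hasDerivAt_powSum {c : ℕ → E} {K M r : ℝ} (hM : 0 < M)
    (hc : ∀ n, ‖c n‖ ≤ K * M ^ n) (hr : 4 * M * |r| < 1) :
    HasDerivAt (powSum c) (powSum (derivCoeff c) r) r := by
  have hK : 0 ≤ K := by simpa using (norm_nonneg _).trans (hc 0)
  have hmem : ∀ y : ℝ, y ∈ Metric.ball (0 : ℝ) (1 / (4 * M)) ↔ 4 * M * |y| < 1 := fun y => by
    rw [mem_ball_zero_iff, Real.norm_eq_abs, lt_div_iff₀ (by positivity), mul_comm]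
  -- `n |y|ⁿ⁻¹ K Mⁿ` is dominated by `4 K M 2⁻ⁿ` when `|y| ≤ 1 / (4 M)`, because `n ≤ 2ⁿ`.
  have key := hasDerivAt_tsum_of_isPreconnected (𝕜 := ℝ)
    (u := fun n : ℕ => 4 * K * M * (1 / 2 : ℝ) ^ n)
    (g := fun n y => y ^ n • c n) (g' := fun n y => ((n : ℝ) * y ^ (n - 1)) • c n)
    (t := Metric.ball (0 : ℝ) (1 / (4 * M))) (y₀ := 0) (y := r)
    ((summable_geometric_of_lt_one (by norm_num) (by norm_num)).mul_left _)
    Metric.isOpen_ball (convex_ball _ _).isPreconnected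
    (fun n y _ => (hasDerivAt_pow n y).smul_const (c n))
    (fun n y hy => by
      rw [hmem] at hy
      rcases n with _ | n
      · simp; positivity
      · rw [norm_smul, norm_mul, norm_pow, Real.norm_eq_abs, Real.norm_eq_abs,
          Nat.abs_cast, Nat.add_sub_cancel]
        have h2 : (((n + 1 : ℕ)) : ℝ) ≤ 2 ^ (n + 1) := by
          exact_mod_cast (Nat.lt_two_pow_self (n := n + 1)).le
        calc ((n + 1 : ℕ) : ℝ) * |y| ^ n * ‖c (n + 1)‖
            ≤ 2 ^ (n + 1) * |y| ^ n * (K * M ^ (n + 1)) := by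
              gcongr
              exact hc _
          _ = 4 * K * M * (1 / 2) ^ (n + 1) * (4 * M * |y|) ^ n := by
              rw [mul_pow, mul_pow, show (4 : ℝ) = 2 * 2 by norm_num, mul_pow, one_div, inv_pow]
              field_simp
              ring
          _ ≤ 4 * K * M * (1 / 2) ^ (n + 1) * 1 := by
              gcongr
              exact pow_le_one₀ (by positivity) hy.le
          _ = _ := by ring)
    (by rw [hmem]; simp)
    (hasSum_powSum (r := 0) hM hc (by simp)).summable
    (by rwa [hmem])
  have hr' : 2 * M * |r| < 1 := by nlinarith [abs_nonneg r]
  have hs : HasSum (fun n : ℕ => ((n : ℝ) * r ^ (n - 1)) • c n) (powSum (derivCoeff c) r) := by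
    rw [← hasSum_nat_add_iff' 1]
    simpa [derivCoeff, smul_smul, mul_comm] using
      hasSum_powSum (by positivity) (norm_derivCoeff_le hM hc) hr'
  rw [hs.tsum_eq] at key
  exact key

lemma analyticAt_powSum {c : ℕ → E} {K M : ℝ} (hM : 0 < M)
    (hc : ∀ n, ‖c n‖ ≤ K * M ^ n) : AnalyticAt ℝ (powSum c) 0 := by
  let q : FormalMultilinearSeries ℝ ℝ E := fun n =>
    ContinuousMultilinearMap.mkPiRing ℝ (Fin n) (c n)
  have hrad : 0 < q.radius := by
    refine lt_of_lt_of_le ?_ (q.le_radius_of_bound (r := (Real.toNNReal M)⁻¹) K fun n => ?_)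
    · simpa using hM
    · have : ‖q n‖ = ‖c n‖ := by simp [q]
      rw [this, NNReal.coe_inv, Real.coe_toNNReal _ hM.le, inv_pow]
      exact mul_inv_le_of_le_mul₀ (by positivity)
        (by simpa using (norm_nonneg _).trans (hc 0)) (hc n)
  have h := (q.hasFPowerSeriesOnBall hrad).analyticAt
  have : q.sum = powSum c := by
    funext r
    simp [FormalMultilinearSeries.sum, powSum, q]
  rwa [this] at h

end PowerSeries

/-! ### The Frobenius recursion -/

/-- The coefficients of the solution `h` of `r² h'' + (2l + 2) r h' + (∑ rᵏ wₖ) h = 0` with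
`h 0 = v`, under the assumption `w 0 = 0`, which is why `w 0` does not enter. -/
noncomputable def frobCoeff (l : ℕ) (w : ℕ → Matrix (Fin 2) (Fin 2) ℂ) (v : Fin 2 → ℂ) :
    ℕ → Fin 2 → ℂ
  | 0 => v
  | n + 1 => -(1 / (((n : ℝ) + 1) * (n + 2 * l + 2))) •
      ∑ k : Fin (n + 1), (w (n + 1 - k)).mulVec (frobCoeff l w v k)
  decreasing_by exact k.2

lemma frobCoeff_succ (l : ℕ) (w : ℕ → Matrix (Fin 2) (Fin 2) ℂ) (v : Fin 2 → ℂ) (n : ℕ) :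
    frobCoeff l w v (n + 1) = -(1 / (((n : ℝ) + 1) * (n + 2 * l + 2))) •
      ∑ k ∈ range (n + 1), (w (n + 1 - k)).mulVec (frobCoeff l w v k) := by
  rw [frobCoeff, Finset.sum_range]

lemma frobCoeff_recursion (l : ℕ) (w : ℕ → Matrix (Fin 2) (Fin 2) ℂ) (v : Fin 2 → ℂ)
    (hw : w 0 = 0) (n : ℕ) :
    ((n : ℝ) * (n + 2 * l + 1)) • frobCoeff l w v n +
      ∑ kl ∈ antidiagonal n, (w kl.1).mulVec (frobCoeff l w v kl.2) = 0 := by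
  rw [← Finset.Nat.sum_antidiagonal_swap]
  simp only [Prod.fst_swap, Prod.snd_swap]
  rw [Finset.Nat.sum_antidiagonal_eq_sum_range_succ
    (fun i j => (w j).mulVec (frobCoeff l w v i)), Finset.sum_range_succ]
  rcases n with _ | n
  · simp [hw]
  · rw [frobCoeff_succ]
    have : ((n : ℝ) + 1) * (n + 2 * l + 2) ≠ 0 := by positivity
    rw [smul_smul, Nat.sub_self, hw, Matrix.zero_mulVec, add_zero]
    rw [show ((n + 1 : ℕ) : ℝ) * (((n + 1 : ℕ) : ℝ) + 2 * l + 1) *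
      -(1 / (((n : ℝ) + 1) * (n + 2 * l + 2))) = -1 by push_cast; field_simp; ring]
    simp

lemma norm_mulVec_le_of_entries {A : Matrix (Fin 2) (Fin 2) ℂ} {B : ℝ}
    (hA : ∀ i j, ‖A i j‖ ≤ B) (x : Fin 2 → ℂ) : ‖A.mulVec x‖ ≤ 2 * B * ‖x‖ := by
  have hB : 0 ≤ B := (norm_nonneg _).trans (hA 0 0)
  refine (pi_norm_le_iff_of_nonneg (by positivity)).2 fun i => ?_
  rw [Matrix.mulVec, dotProduct]
  refine (norm_sum_le _ _).trans ?_
  calc ∑ j, ‖A i j * x j‖ ≤ ∑ _j : Fin 2, B * ‖x‖ := by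
        refine Finset.sum_le_sum fun j _ => ?_
        rw [norm_mul]
        gcongr
        · exact hA i j
        · exact norm_le_pi_norm x j
    _ = _ := by simp; ring

/-- The constant `2 ρ²` absorbs both the factor `ρ` in the bound on `wₖ` and the number `2` of
channels; the `n` terms of the recursion are compensated by the indicial factor. -/
lemma norm_frobCoeff_le (l : ℕ) {w : ℕ → Matrix (Fin 2) (Fin 2) ℂ} {v : Fin 2 → ℂ} {ρ : ℝ}
    (hρ : 1 ≤ ρ) (hv : ‖v‖ ≤ 1) (hw : ∀ n i j, ‖w n i j‖ ≤ ρ * ρ ^ n) (n : ℕ) :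
    ‖frobCoeff l w v n‖ ≤ (2 * ρ ^ 2) ^ n := by
  induction n using Nat.strong_induction_on with
  | _ n ih =>
    rcases n with _ | n
    · simpa [frobCoeff] using hv
    · rw [frobCoeff_succ, norm_smul, norm_neg, Real.norm_of_nonneg (by positivity)]
      have hρM : ρ ≤ 2 * ρ ^ 2 := by nlinarith
      have hterm : ∀ k ∈ range (n + 1),
          ‖(w (n + 1 - k)).mulVec (frobCoeff l w v k)‖ ≤ (2 * ρ ^ 2) ^ (n + 1) := by
        intro k hk
        rw [mem_range] at hk
        obtain ⟨m, rfl⟩ : ∃ m, n = k + m := ⟨n - k, by omega⟩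
        have e : k + m + 1 - k = m + 1 := by omega
        rw [e]
        calc _ ≤ 2 * (ρ * ρ ^ (m + 1)) * (2 * ρ ^ 2) ^ k :=
              (norm_mulVec_le_of_entries (hw (m + 1)) _).trans (by gcongr; exact ih k hk)
          _ = (2 * ρ ^ 2) * ρ ^ m * (2 * ρ ^ 2) ^ k := by ring
          _ ≤ (2 * ρ ^ 2) * (2 * ρ ^ 2) ^ m * (2 * ρ ^ 2) ^ k := by gcongr
          _ = _ := by ring
      have hsum := (norm_sum_le _ _).trans (Finset.sum_le_sum hterm)
      rw [Finset.sum_const, card_range, nsmul_eq_mul] at hsum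
      have hl : (0 : ℝ) ≤ l := l.cast_nonneg
      have hn : (0 : ℝ) ≤ n := n.cast_nonneg
      have hX : 0 ≤ (2 * ρ ^ 2) ^ (n + 1) := by positivity
      rw [one_div, inv_mul_le_iff₀ (by positivity)]
      refine hsum.trans (mul_le_mul_of_nonneg_right ?_ hX)
      push_cast
      nlinarith [mul_nonneg hn hl]

/-! ### The equation for `h` -/

lemma frob_equation (l : ℕ) {w : ℕ → Matrix (Fin 2) (Fin 2) ℂ} {v : Fin 2 → ℂ} {ρ M K r : ℝ}
    {A : Matrix (Fin 2) (Fin 2) ℂ} (hρ : 0 < ρ) (hρM : ρ ≤ M)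
    (hw0 : w 0 = 0) (hw : ∀ n i j, ‖w n i j‖ ≤ ρ * ρ ^ n)
    (hA : ∀ i j, HasSum (fun n => r ^ n • w n i j) (A i j))
    (ha : ∀ n, ‖frobCoeff l w v n‖ ≤ K * M ^ n) (hr : 4 * M * |r| < 1) :
    r ^ 2 • powSum (derivCoeff (derivCoeff (frobCoeff l w v))) r
      + ((2 * l + 2) * r) • powSum (derivCoeff (frobCoeff l w v)) r
      + A.mulVec (powSum (frobCoeff l w v) r) = 0 := by
  set a := frobCoeff l w v with ha_def
  have hM : 0 < M := hρ.trans_le hρM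
  have hr1 : M * |r| < 1 := by nlinarith [abs_nonneg r]
  have hr2 : 2 * M * |r| < 1 := by nlinarith [abs_nonneg r]
  have hrρ : ρ * |r| < 1 := by nlinarith [abs_nonneg r]
  have hb1 := norm_derivCoeff_le hM ha
  have hb2 := norm_derivCoeff_le (by positivity) hb1
  have h1 := hasSum_mul_deriv (hasSum_powSum (by positivity) hb1 hr2)
  have h2 := hasSum_sq_mul_deriv_deriv (hasSum_powSum (by positivity) hb2 (by linarith))
  have h0 := hasSum_powSum hM ha hr1
  have hcoord : ∀ j, HasSum (fun n => r ^ n • a n j) (powSum a r j) := fun j =>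
    (Pi.hasSum.1 h0) j
  have hcoordn : ∀ j, Summable fun n => ‖r ^ n • a n j‖ := fun j =>
    summable_norm_powSum (c := fun n => a n j) hM
      (fun n => (norm_le_pi_norm (a n) j).trans (ha n)) hr1
  have hWn : ∀ i j, Summable fun n => ‖r ^ n • w n i j‖ := fun i j =>
    summable_norm_powSum (c := fun n => w n i j) hρ (fun n => hw n i j) hrρ
  have h3 : HasSum (fun n => r ^ n • ∑ kl ∈ antidiagonal n, (w kl.1).mulVec (a kl.2))
      (A.mulVec (powSum a r)) := by
    rw [Pi.hasSum]
    intro i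
    have hprod : ∀ j, HasSum
        (fun n => ∑ kl ∈ antidiagonal n, (r ^ kl.1 • w kl.1 i j) * (r ^ kl.2 • a kl.2 j))
        (A i j * powSum a r j) := fun j => by
      have e := tsum_mul_tsum_eq_tsum_sum_antidiagonal_of_summable_norm (hWn i j) (hcoordn j)
      rw [(hA i j).tsum_eq, (hcoord j).tsum_eq] at e
      rw [e]
      exact (summable_norm_sum_mul_antidiagonal_of_summable_norm
        (hWn i j) (hcoordn j)).of_norm.hasSum
    have := hasSum_sum (s := Finset.univ) fun j _ => hprod j
    rw [Matrix.mulVec, dotProduct]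
    convert this using 1
    funext n
    rw [Finset.sum_comm, Pi.smul_apply, Finset.sum_apply, Finset.smul_sum]
    refine Finset.sum_congr rfl fun kl hkl => ?_
    rw [← mem_antidiagonal.1 hkl, Matrix.mulVec, dotProduct, Finset.smul_sum]
    refine Finset.sum_congr rfl fun j _ => ?_
    rw [smul_mul_smul_comm, pow_add]
  have htot := (h2.add (h1.const_smul (2 * (l : ℝ) + 2))).add h3
  rw [smul_smul] at htot
  refine htot.unique ?_
  convert hasSum_zero with n
  have hrec := congrArg (fun x => r ^ n • x) (frobCoeff_recursion l w v hw0 n)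
  simp only [smul_add, smul_zero, smul_smul] at hrec
  rw [smul_smul, ← add_smul, ← hrec]
  congr 2
  ring

/-! ### Restoring the factor `r ^ l` -/

/-- Away from `0` this form of the derivative avoids the truncated exponent `l - 1`. -/
lemma hasDerivAt_pow_div (l : ℕ) {r : ℝ} (hr : r ≠ 0) :
    HasDerivAt (fun x : ℝ => x ^ l) (l / r * r ^ l) r := by
  refine (hasDerivAt_pow l r).congr_deriv ?_
  rcases l with _ | l
  · simp
  · simp only [Nat.add_sub_cancel, pow_succ]
    field_simp

lemma radial_of_frob (l : ℕ) {h h1 h2 : ℝ → Fin 2 → ℂ} {ε : ℝ} {A : Matrix (Fin 2) (Fin 2) ℂ}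
    (hd1 : ∀ r ∈ Set.Ioo 0 ε, HasDerivAt h (h1 r) r)
    (hd2 : ∀ r ∈ Set.Ioo 0 ε, HasDerivAt h1 (h2 r) r) {r : ℝ} (hr : r ∈ Set.Ioo 0 ε)
    (heq : r ^ 2 • h2 r + ((2 * l + 2) * r) • h1 r + ((r ^ 2 : ℝ) • A).mulVec (h r) = 0) :
    DifferentiableAt ℝ (fun r : ℝ => r ^ l • h r) r ∧
    DifferentiableAt ℝ (deriv (fun r : ℝ => r ^ l • h r)) r ∧
    deriv (deriv (fun r : ℝ => r ^ l • h r)) r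
      + (2 / r) • deriv (fun r : ℝ => r ^ l • h r) r
      - (((l : ℝ) * ((l : ℝ) + 1)) / r ^ 2) • (r ^ l • h r)
      + A.mulVec (r ^ l • h r) = 0 := by
  have hu : ∀ x ∈ Set.Ioo 0 ε, HasDerivAt (fun r : ℝ => r ^ l • h r)
      (x ^ l • h1 x + (l / x * x ^ l) • h x) x := fun x hx =>
    (hasDerivAt_pow_div l hx.1.ne').fun_smul (hd1 x hx)
  have hr0 : r ≠ 0 := hr.1.ne'
  have hev : deriv (fun r : ℝ => r ^ l • h r) =ᶠ[𝓝 r]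
      fun x => x ^ l • h1 x + (l / x * x ^ l) • h x := by
    filter_upwards [isOpen_Ioo.mem_nhds hr] with x hx using (hu x hx).deriv
  have hlog : HasDerivAt (fun x : ℝ => l / x * x ^ l)
      (-l / r ^ 2 * r ^ l + l / r * (l / r * r ^ l)) r := by
    have := ((hasDerivAt_inv hr0).const_mul (l : ℝ)).fun_mul (hasDerivAt_pow_div l hr0)
    refine this.congr_deriv ?_
    ring
  have huu := (((hasDerivAt_pow_div l hr0).fun_smul (hd2 r hr)).fun_add
    (hlog.fun_smul (hd1 r hr))).congr_of_eventuallyEq hev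
  refine ⟨(hu r hr).differentiableAt, huu.differentiableAt, ?_⟩
  rw [huu.deriv, (hu r hr).deriv, Matrix.mulVec_smul]
  rw [Matrix.smul_mulVec] at heq
  -- The left-hand side is `r ^ l / r ^ 2` times the equation for `h`.
  have := congrArg (fun x => (r ^ l / r ^ 2) • x) heq
  simp only [smul_zero] at this
  rw [← this]
  match_scalars <;> field_simp <;> ring


/-- Existence of the two bounded (regular) solutions `u⁽ⁱ⁾` of the coupled
two-channel radial Schrödinger equation
`u'' + (2/r)u' - (l(l+1)/r²)u + W(r)u = 0`,
behaving like `u⁽ⁱ⁾_j(r) ~ r^l δ_{ij}` near `r = 0`, under the hypothesis that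
`r² W(r)` extends to a function analytic at `0` vanishing at `0`. -/
theorem bounded_solutions_two_channel_radial
    (l : ℕ) (W : ℝ → Matrix (Fin 2) (Fin 2) ℂ)
    (W' : ℝ → Matrix (Fin 2) (Fin 2) ℂ)
    (hW'anal : ∀ i j : Fin 2, AnalyticAt ℝ (fun r : ℝ => W' r i j) 0)
    (hW'0 : W' 0 = 0)
    (hW'ext : ∀ r : ℝ, r ≠ 0 → W' r = (r ^ 2 : ℝ) • W r) :
    ∀ i : Fin 2, ∃ (ε : ℝ) (h : ℝ → (Fin 2 → ℂ)), 0 < ε ∧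
      AnalyticAt ℝ h 0 ∧ h 0 = Pi.single i 1 ∧
      (∀ r ∈ Set.Ioo (0 : ℝ) ε,
        DifferentiableAt ℝ (fun r : ℝ => r ^ l • h r) r ∧
        DifferentiableAt ℝ (deriv (fun r : ℝ => r ^ l • h r)) r ∧
        deriv (deriv (fun r : ℝ => r ^ l • h r)) r
          + (2 / r) • deriv (fun r : ℝ => r ^ l • h r) r
          - (((l : ℝ) * ((l : ℝ) + 1)) / r ^ 2) • (r ^ l • h r)
          + (W r).mulVec (r ^ l • h r) = 0) := by
  intro i
  choose w hw using fun i j => (hW'anal i j).exists_coeff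
  obtain ⟨ρ, hρ1, hρ⟩ := ((eventually_ge_atTop (1 : ℝ)).and
    (eventually_all.2 fun i => eventually_all.2 fun j => hw i j)).exists
  let w' : ℕ → Matrix (Fin 2) (Fin 2) ℂ := fun n => Matrix.of fun i j => w i j n
  have hw0 : w' 0 = 0 := by
    ext i j
    have h1 := (hρ i j).2 0 (by simp)
    have h2 : HasSum (fun n => (0 : ℝ) ^ n • w i j n) (w i j 0) := by
      simpa using hasSum_single (f := fun n => (0 : ℝ) ^ n • w i j n) 0
        (fun n hn => by simp [hn])
    simpa [w', hW'0] using h2.unique h1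
  have hb : ∀ n i j, ‖w' n i j‖ ≤ ρ * ρ ^ n := fun n i j => (hρ i j).1 n
  set v : Fin 2 → ℂ := Pi.single i 1 with hv
  have hv1 : ‖v‖ ≤ 1 := by
    refine (pi_norm_le_iff_of_nonneg zero_le_one).2 fun j => ?_
    by_cases hj : j = i
    · subst hj; simp [hv]
    · simp [hv, hj]
  set M : ℝ := 2 * ρ ^ 2 with hM_def
  have hρM : ρ ≤ M := by nlinarith
  have hM : 0 < M := by positivity
  have ha : ∀ n, ‖frobCoeff l w' v n‖ ≤ 1 * M ^ n := fun n => by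
    simpa using norm_frobCoeff_le l hρ1 hv1 hb n
  have hb1 := norm_derivCoeff_le hM ha
  have hlt : ∀ r ∈ Set.Ioo (0 : ℝ) (1 / (8 * M)), 8 * M * |r| < 1 := fun r hr => by
    rw [abs_of_pos hr.1, mul_comm]
    exact (lt_div_iff₀ (by positivity)).1 hr.2
  refine ⟨1 / (8 * M), powSum (frobCoeff l w' v), by positivity, analyticAt_powSum hM ha, ?_,
    fun r hr => ?_⟩
  · rw [powSum, tsum_eq_single 0 (fun n hn => by simp [hn])]
    simp [frobCoeff]
  · refine radial_of_frob l
      (fun x hx => hasDerivAt_powSum hM ha (by nlinarith [hlt x hx, abs_nonneg x]))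
      (fun x hx => hasDerivAt_powSum (by positivity) hb1 (by linarith [hlt x hx])) hr ?_
    rw [← hW'ext r hr.1.ne']
    have h4 : 4 * M * |r| < 1 := by nlinarith [hlt r hr, abs_nonneg r]
    refine frob_equation l (by positivity) hρM hw0 hb (fun i j => (hρ i j).2 r ?_) ha h4
    nlinarith [abs_nonneg r]
end

section
/- Let l be a natural number and let W : ℝ → Matrix (Fin 2) (Fin 2) ℂ be a matrix-valued function such that the function r ↦ r²·W(r) extends to a function analytic at r = 0 whose value at 0 is the zero matrix. Then for each i ∈ {1,2} there exist ε > 0 and a function v : ℝ → (Fin 2 → ℂ), twice differentiable on (0,ε), satisfying v''(r) + (2/r)·v'(r) − (l(l+1)/r²)·v(r) + W(r)·v(r) = 0 on (0,ε), which is unbounded near r = 0 and satisfies r^{l+1}·v_j(r) → δ_{ij} as r → 0⁺ (i.e. v⁽ⁱ⁾_j(r) ~ r^{−l−1} δ_{ij}). -/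
/-! Writing `v = r^{-(l+1)} y` turns the radial equation into `y'' - (2l/r) y' + W y = 0`, and the
hypothesis on `r² W` gives `W = B / r` near `0` with `B` bounded. Variation of constants, with the
inner integration started at the outer end point `ε`, gives the integral equation
`y(r) = e + ∫₀^r t^{2l} ∫_t^ε s^{-2l-1} B(s) y(s) ds dt
      = e + ∫₀^ε (min(r,s)/s)^{2l+1}/(2l+1) B(s) y(s) ds`.
The kernel is bounded by `1`, so the right-hand side is a contraction on bounded continuous functions
once `ε · sup ‖B‖ < 1` (`exists_fixedPoint`). Its fixed point `y` is continuous with `y(0) = e`, and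
differentiating the integral equation twice recovers the differential equation
(`hasDerivAt_solution`, `hasDerivAt_solution_deriv`). Taking `e` to be a basis vector, `r^{l+1} v = y`
tends to `e ≠ 0`, which also makes `v` unbounded. -/

open MeasureTheory Set Filter Topology
open scoped BoundedContinuousFunction

namespace RadialSystem

/-! ### The Green kernel -/

/-- The kernel `(min(r,s)/s)^{n+1}/(n+1)` for which `y(r) = e + ∫₀^ε kernel n r s • g(s) ds` solves
`y'' - (n/r) y' = -g/r` on `(0, ε)`. The variable `r` is truncated below at `0`, so that for each
`s > 0` the kernel is bounded and continuous in `r` on the whole line. -/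
noncomputable def kernel (n : ℕ) (r s : ℝ) : ℝ := (min (max r 0) s / s) ^ (n + 1) / (n + 1)

lemma kernel_nonneg (n : ℕ) (r : ℝ) {s : ℝ} (hs : 0 < s) : 0 ≤ kernel n r s := by
  unfold kernel
  have : 0 ≤ min (max r 0) s := le_min (le_max_right _ _) hs.le
  positivity

lemma kernel_le_one (n : ℕ) (r : ℝ) {s : ℝ} (hs : 0 < s) : kernel n r s ≤ 1 := by
  unfold kernel
  have h0 : 0 ≤ min (max r 0) s := le_min (le_max_right _ _) hs.le
  have h1 : min (max r 0) s / s ≤ 1 := by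
    rw [div_le_one hs]; exact min_le_right _ _
  have h2 : (min (max r 0) s / s) ^ (n + 1) ≤ 1 := pow_le_one₀ (by positivity) h1
  rw [div_le_one (by positivity)]
  have : (0 : ℝ) ≤ n := by positivity
  linarith

lemma norm_kernel_smul_le {E : Type*} [NormedAddCommGroup E] [NormedSpace ℝ E]
    (n : ℕ) (r : ℝ) {s : ℝ} (hs : 0 < s) (x : E) : ‖kernel n r s • x‖ ≤ ‖x‖ := by
  rw [norm_smul, Real.norm_of_nonneg (kernel_nonneg n r hs)]
  exact mul_le_of_le_one_left (norm_nonneg _) (kernel_le_one n r hs)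

lemma continuous_kernel_left (n : ℕ) (s : ℝ) : Continuous fun r => kernel n r s := by
  unfold kernel; fun_prop

lemma continuousOn_kernel_right (n : ℕ) (r : ℝ) :
    ContinuousOn (fun s => kernel n r s) (Ioi 0) := by
  unfold kernel
  refine ContinuousOn.div_const (ContinuousOn.pow (ContinuousOn.div ?_ continuousOn_id ?_) _) _
  · fun_prop
  · intro s hs; exact (ne_of_gt hs)

lemma intervalIntegrable_of_continuousOn_of_bound {E : Type*} [NormedAddCommGroup E]
    {g : ℝ → E} {a ε C : ℝ} (ha : 0 ≤ a) (haε : a ≤ ε)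
    (hg : ContinuousOn g (Ioc 0 ε)) (hC : ∀ s ∈ Ioc 0 ε, ‖g s‖ ≤ C) :
    IntervalIntegrable g volume a ε := by
  have hsub : Ioc a ε ⊆ Ioc 0 ε := Ioc_subset_Ioc_left ha
  rw [intervalIntegrable_iff_integrableOn_Ioc_of_le haε]
  refine Integrable.of_bound ((hg.mono hsub).aestronglyMeasurable measurableSet_Ioc) C ?_
  filter_upwards [ae_restrict_mem measurableSet_Ioc] with s hs using hC s (hsub hs)

section

variable {E : Type*} [NormedAddCommGroup E] [NormedSpace ℝ E]

/-! ### The integral equation -/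

/-- The integral equation has a bounded continuous solution, by the contraction principle. -/
lemma exists_fixedPoint [CompleteSpace E] (n : ℕ) {ε M : ℝ} (hε : 0 < ε) (hM : 0 ≤ M)
    (hεM : ε * M < 1) (F : ℝ → E → E) (hF0 : ∀ s, F s 0 = 0)
    (hFlip : ∀ s ∈ Ioc 0 ε, ∀ x z, ‖F s x - F s z‖ ≤ M * ‖x - z‖)
    (hFc : ∀ y : ℝ → E, Continuous y → ContinuousOn (fun s => F s (y s)) (Ioc 0 ε)) (e : E) :
    ∃ y : ℝ →ᵇ E, ∀ r, y r = e + ∫ s in (0 : ℝ)..ε, kernel n r s • F s (y s) := by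
  have hFb : ∀ s ∈ Ioc 0 ε, ∀ x, ‖F s x‖ ≤ M * ‖x‖ := fun s hs x => by
    simpa [hF0] using hFlip s hs x 0
  have hIoc : uIoc 0 ε = Ioc 0 ε := uIoc_of_le hε.le
  have hcont : ∀ (y : ℝ →ᵇ E) (r : ℝ),
      ContinuousOn (fun s => kernel n r s • F s (y s)) (Ioc 0 ε) := fun y r =>
    ((continuousOn_kernel_right n r).mono Ioc_subset_Ioi_self).smul (hFc y y.continuous)
  have hbd : ∀ (y : ℝ →ᵇ E) (r : ℝ), ∀ s ∈ Ioc 0 ε, ‖kernel n r s • F s (y s)‖ ≤ M * ‖y‖ :=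
    fun y r s hs => (norm_kernel_smul_le n r hs.1 _).trans <| (hFb s hs _).trans <|
      mul_le_mul_of_nonneg_left (y.norm_coe_le_norm s) hM
  have hint : ∀ (y : ℝ →ᵇ E) (r : ℝ),
      IntervalIntegrable (fun s => kernel n r s • F s (y s)) volume 0 ε := fun y r =>
    intervalIntegrable_of_continuousOn_of_bound le_rfl hε.le (hcont y r) (hbd y r)
  have hTc : ∀ y : ℝ →ᵇ E,
      Continuous fun r => e + ∫ s in (0 : ℝ)..ε, kernel n r s • F s (y s) := by
    intro y
    refine continuous_const.add (intervalIntegral.continuous_of_dominated_interval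
      (bound := fun _ => M * ‖y‖) ?_ ?_ (by simp) ?_)
    · intro r
      rw [hIoc]
      exact (hcont y r).aestronglyMeasurable measurableSet_Ioc
    · intro r
      refine ae_of_all _ fun s hs => ?_
      rw [hIoc] at hs
      exact hbd y r s hs
    · refine ae_of_all _ fun s _ => ?_
      exact (continuous_kernel_left n s).smul continuous_const
  have hTb : ∀ (y : ℝ →ᵇ E) (r : ℝ),
      ‖e + ∫ s in (0 : ℝ)..ε, kernel n r s • F s (y s)‖ ≤ ‖e‖ + M * ‖y‖ * |ε - 0| := by
    intro y r
    refine (norm_add_le _ _).trans (add_le_add_right ?_ _)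
    refine intervalIntegral.norm_integral_le_of_norm_le_const fun s hs => ?_
    rw [hIoc] at hs
    exact hbd y r s hs
  let T : (ℝ →ᵇ E) → (ℝ →ᵇ E) := fun y =>
    BoundedContinuousFunction.ofNormedAddCommGroup _ (hTc y) _ (hTb y)
  have hT : ContractingWith ⟨ε * M, mul_nonneg hε.le hM⟩ T := by
    refine ⟨by exact_mod_cast hεM, LipschitzWith.of_dist_le_mul fun y z => ?_⟩
    change dist (T y) (T z) ≤ ε * M * dist y z
    rw [BoundedContinuousFunction.dist_le (mul_nonneg (mul_nonneg hε.le hM) dist_nonneg)]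
    intro r
    change dist (e + ∫ s in (0 : ℝ)..ε, kernel n r s • F s (y s))
      (e + ∫ s in (0 : ℝ)..ε, kernel n r s • F s (z s)) ≤ ε * M * dist y z
    rw [dist_add_left, dist_eq_norm, ← intervalIntegral.integral_sub (hint y r) (hint z r)]
    have : ∀ s ∈ uIoc 0 ε, ‖kernel n r s • F s (y s) - kernel n r s • F s (z s)‖
        ≤ M * dist y z := by
      intro s hs
      rw [hIoc] at hs
      rw [← smul_sub]
      refine (norm_kernel_smul_le n r hs.1 _).trans ((hFlip s hs _ _).trans ?_)
      rw [← dist_eq_norm]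
      exact mul_le_mul_of_nonneg_left (y.dist_coe_le_dist s) hM
    refine (intervalIntegral.norm_integral_le_of_norm_le_const this).trans_eq ?_
    rw [sub_zero, abs_of_pos hε]; ring
  have hfix : T (hT.fixedPoint T) = hT.fixedPoint T := hT.fixedPoint_isFixedPt
  refine ⟨hT.fixedPoint T, fun r => ?_⟩
  exact (congrArg (fun y : ℝ →ᵇ E => y r) hfix).symm

/-! ### Recovering the differential equation -/

/-- The integral operator with `g(s) = B(s) y(s)` split at `s = r`, where the kernel switches form. -/
lemma integral_kernel_split (n : ℕ) {ε C : ℝ} {g : ℝ → E}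
    (hg : ContinuousOn g (Ioc 0 ε)) (hC : ∀ s ∈ Ioc 0 ε, ‖g s‖ ≤ C) {r : ℝ} (hr : r ∈ Ioo 0 ε) :
    ∫ s in (0 : ℝ)..ε, kernel n r s • g s = ((n : ℝ) + 1)⁻¹ •
      ((∫ s in (0 : ℝ)..r, g s) + r ^ (n + 1) • ∫ s in r..ε, (s ^ (n + 1))⁻¹ • g s) := by
  obtain ⟨hr0, hrε⟩ := hr
  have hint : IntervalIntegrable (fun s => kernel n r s • g s) volume 0 ε :=
    intervalIntegrable_of_continuousOn_of_bound le_rfl (hr0.trans hrε).le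
      (((continuousOn_kernel_right n r).mono Ioc_subset_Ioi_self).smul hg)
      (fun s hs => (norm_kernel_smul_le n r hs.1 _).trans (hC s hs))
  have h1 : IntervalIntegrable (fun s => kernel n r s • g s) volume 0 r :=
    hint.mono_set (by rw [uIcc_of_le hr0.le, uIcc_of_le (hr0.trans hrε).le]
                      exact Icc_subset_Icc_right hrε.le)
  have h2 : IntervalIntegrable (fun s => kernel n r s • g s) volume r ε :=
    hint.mono_set (by rw [uIcc_of_le hrε.le, uIcc_of_le (hr0.trans hrε).le]
                      exact Icc_subset_Icc_left hr0.le)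
  rw [← intervalIntegral.integral_add_adjacent_intervals h1 h2, smul_add,
    ← intervalIntegral.integral_smul, ← intervalIntegral.integral_smul,
    ← intervalIntegral.integral_smul]
  congr 1
  · refine intervalIntegral.integral_congr_ae (ae_of_all _ fun s hs => ?_)
    rw [uIoc_of_le hr0.le] at hs
    have hs0 : s ≠ 0 := hs.1.ne'
    simp only [kernel, max_eq_left hr0.le, min_eq_right hs.2, div_self hs0, one_pow, one_div]
  · refine intervalIntegral.integral_congr_ae (ae_of_all _ fun s hs => ?_)
    rw [uIoc_of_le hrε.le] at hs
    simp only [kernel, max_eq_left hr0.le, min_eq_left hs.1.le, smul_smul]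
    congr 1
    rw [div_pow]; ring

/-- The first derivative of `y` is a power of `r` times an integral over `[r, ε]`, which is itself
differentiable. The contributions `± g(r)/(n+1)` of the moving end points cancel. -/
lemma hasDerivAt_solution [CompleteSpace E] (n : ℕ) {ε C : ℝ} {g : ℝ → E}
    (hg : ContinuousOn g (Ioc 0 ε)) (hC : ∀ s ∈ Ioc 0 ε, ‖g s‖ ≤ C) (e : E) {y : ℝ → E}
    (hy : ∀ r, y r = e + ∫ s in (0 : ℝ)..ε, kernel n r s • g s) {r : ℝ} (hr : r ∈ Ioo 0 ε) :
    HasDerivAt y (r ^ n • ∫ s in r..ε, (s ^ (n + 1))⁻¹ • g s) r ∧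
    HasDerivAt (fun r => ∫ s in r..ε, (s ^ (n + 1))⁻¹ • g s) (-((r ^ (n + 1))⁻¹ • g r)) r := by
  have hr0 := hr.1
  have hnhds : Ioo 0 ε ∈ 𝓝 r := isOpen_Ioo.mem_nhds hr
  have hg' : ContinuousOn g (Ioo 0 ε) := hg.mono Ioo_subset_Ioc_self
  have hh : ContinuousOn (fun s => (s ^ (n + 1))⁻¹ • g s) (Ioc 0 ε) :=
    ContinuousOn.smul (ContinuousOn.inv₀ (by fun_prop) fun s hs => pow_ne_zero _ hs.1.ne') hg
  have hh' : ContinuousOn (fun s => (s ^ (n + 1))⁻¹ • g s) (Ioo 0 ε) :=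
    hh.mono Ioo_subset_Ioc_self
  have hsub : Icc r ε ⊆ Ioc 0 ε := fun s hs => ⟨hr0.trans_le hs.1, hs.2⟩
  have hI2 : HasDerivAt (fun r => ∫ s in r..ε, (s ^ (n + 1))⁻¹ • g s)
      (-((r ^ (n + 1))⁻¹ • g r)) r := by
    refine intervalIntegral.integral_hasDerivAt_left ?_ ?_ (hh'.continuousAt hnhds)
    · exact ContinuousOn.intervalIntegrable (by rw [uIcc_of_le hr.2.le]; exact hh.mono hsub)
    · exact hh'.stronglyMeasurableAtFilter isOpen_Ioo r hr
  have hI1 : HasDerivAt (fun r => ∫ s in (0 : ℝ)..r, g s) (g r) r := by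
    refine intervalIntegral.integral_hasDerivAt_right ?_ ?_ (hg'.continuousAt hnhds)
    · refine intervalIntegrable_of_continuousOn_of_bound le_rfl hr0.le
        (hg.mono (Ioc_subset_Ioc_right hr.2.le)) fun s hs => hC s ⟨hs.1, hs.2.trans hr.2.le⟩
    · exact hg'.stronglyMeasurableAtFilter isOpen_Ioo r hr
  refine ⟨?_, hI2⟩
  have hmain := (((hI1.add ((hasDerivAt_pow (n + 1) r).smul hI2)).const_smul
    ((n : ℝ) + 1)⁻¹).const_add e)
  have heq : y =ᶠ[𝓝 r] fun r => e + ((n : ℝ) + 1)⁻¹ •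
      ((∫ s in (0 : ℝ)..r, g s) + r ^ (n + 1) • ∫ s in r..ε, (s ^ (n + 1))⁻¹ • g s) := by
    filter_upwards [hnhds] with t ht
    rw [hy, integral_kernel_split n hg hC ht]
  refine (hmain.congr_of_eventuallyEq heq).congr_deriv ?_
  have hn : (n : ℝ) + 1 ≠ 0 := by positivity
  have hr0' : r ≠ 0 := hr0.ne'
  push_cast
  match_scalars <;> field_simp
  all_goals ring

/-- `r^{-m}` has derivative `-m r^{-m-1}`. -/
lemma hasDerivAt_inv_pow (m : ℕ) {r : ℝ} (hr : r ≠ 0) :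
    HasDerivAt (fun r : ℝ => (r ^ m)⁻¹) (-m * (r ^ (m + 1))⁻¹) r := by
  refine ((hasDerivAt_pow m r).inv (pow_ne_zero _ hr)).congr_deriv ?_
  rcases m with _ | m
  · simp
  · simp only [Nat.add_sub_cancel]
    field_simp
    ring

/-- Differentiating the integral equation twice yields `y'' = (n/r) y' - g/r`. -/
lemma hasDerivAt_solution_deriv [CompleteSpace E] (n : ℕ) {ε C : ℝ} {g : ℝ → E}
    (hg : ContinuousOn g (Ioc 0 ε)) (hC : ∀ s ∈ Ioc 0 ε, ‖g s‖ ≤ C) (e : E) {y : ℝ → E}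
    (hy : ∀ r, y r = e + ∫ s in (0 : ℝ)..ε, kernel n r s • g s) :
    ∃ y₁ : ℝ → E, ∀ r ∈ Ioo 0 ε, HasDerivAt y (y₁ r) r ∧
      HasDerivAt y₁ ((n / r : ℝ) • y₁ r - r⁻¹ • g r) r := by
  refine ⟨fun r => r ^ n • ∫ s in r..ε, (s ^ (n + 1))⁻¹ • g s, fun r hr => ?_⟩
  obtain ⟨h1, h2⟩ := hasDerivAt_solution n hg hC e hy hr
  refine ⟨h1, ((hasDerivAt_pow n r).smul h2).congr_deriv ?_⟩
  have hr0 : r ≠ 0 := hr.1.ne'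
  rcases n with _ | n
  · match_scalars <;> simp
  · simp only [Nat.add_sub_cancel]
    match_scalars <;> field_simp <;> ring

/-- The substitution `v = r^{-(l+1)} y` turns `y'' - (2l/r) y' + x/r² = 0` into
`v'' + (2/r) v' - (l(l+1)/r²) v + r^{-(l+1)} x/r² = 0`. -/
lemma substitution_solves (l : ℕ) {ε : ℝ} {y y₁ x : ℝ → E}
    (hy : ∀ r ∈ Ioo 0 ε, HasDerivAt y (y₁ r) r)
    (hy₁ : ∀ r ∈ Ioo 0 ε,
      HasDerivAt y₁ (((2 * l : ℕ) / r : ℝ) • y₁ r - r⁻¹ • (r⁻¹ • x r)) r)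
    {r : ℝ} (hr : r ∈ Ioo 0 ε) :
    let v : ℝ → E := fun r => (r ^ (l + 1))⁻¹ • y r
    DifferentiableAt ℝ v r ∧ DifferentiableAt ℝ (deriv v) r ∧
      deriv (deriv v) r + (2 / r) • deriv v r - (((l : ℝ) * ((l : ℝ) + 1)) / r ^ 2) • v r
        + (r ^ (l + 1))⁻¹ • (r ^ 2)⁻¹ • x r = 0 := by
  intro v
  have hv : ∀ t ∈ Ioo 0 ε, HasDerivAt v ((t ^ (l + 1))⁻¹ • y₁ t
      + (-(l + 1 : ℕ) * (t ^ (l + 2))⁻¹ : ℝ) • y t) t := fun t ht =>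
    (hasDerivAt_inv_pow (l + 1) ht.1.ne').smul (hy t ht)
  have heq : deriv v =ᶠ[𝓝 r] fun t => (t ^ (l + 1))⁻¹ • y₁ t
      + (-(l + 1 : ℕ) * (t ^ (l + 2))⁻¹ : ℝ) • y t := by
    filter_upwards [isOpen_Ioo.mem_nhds hr] with t ht using (hv t ht).deriv
  have hr0 : r ≠ 0 := hr.1.ne'
  have hv₂ := (((hasDerivAt_inv_pow (l + 1) hr0).smul (hy₁ r hr)).add
    (((hasDerivAt_inv_pow (l + 2) hr0).const_mul (-(l + 1 : ℕ) : ℝ)).smul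
      (hy r hr))).congr_of_eventuallyEq heq
  refine ⟨(hv r hr).differentiableAt, hv₂.differentiableAt, ?_⟩
  rw [hv₂.deriv, (hv r hr).deriv]
  push_cast
  match_scalars <;> field_simp <;> ring

/-! ### Behaviour near the origin -/

/-- A matrix function analytic at `0` and vanishing there is `O(r)` and continuous near `0`. -/
lemma exists_bound_near_zero {W' : ℝ → Matrix (Fin 2) (Fin 2) ℂ}
    (hW'anal : ∀ i j : Fin 2, AnalyticAt ℝ (fun r : ℝ => W' r i j) 0) (hW'0 : W' 0 = 0) :
    ∃ M : ℝ, 0 ≤ M ∧ ∀ᶠ s in 𝓝 (0 : ℝ),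
      (∀ i j, ContinuousAt (fun r => W' r i j) s) ∧
      ∀ x : Fin 2 → ℂ, ‖(W' s).mulVec x‖ ≤ M * |s| * ‖x‖ := by
  have h1 : ∀ i j, ∃ c : ℝ, 0 < c ∧ ∀ᶠ s in 𝓝 (0 : ℝ), ‖W' s i j‖ ≤ c * |s| := by
    intro i j
    obtain ⟨c, hc, h⟩ := (hW'anal i j).differentiableAt.isBigO_sub.exists_pos
    refine ⟨c, hc, h.bound.mono fun s hs => ?_⟩
    simpa [hW'0] using hs
  choose c hc hcb using h1
  refine ⟨∑ i, ∑ j, c i j, Finset.sum_nonneg fun i _ => Finset.sum_nonneg fun j _ => (hc i j).le, ?_⟩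
  have h2 : ∀ᶠ s in 𝓝 (0 : ℝ), ∀ i j, ContinuousAt (fun r => W' r i j) s :=
    eventually_all.2 fun i => eventually_all.2 fun j =>
      (hW'anal i j).eventually_analyticAt.mono fun s hs => hs.continuousAt
  have h3 : ∀ᶠ s in 𝓝 (0 : ℝ), ∀ i j, ‖W' s i j‖ ≤ c i j * |s| :=
    eventually_all.2 fun i => eventually_all.2 fun j => hcb i j
  filter_upwards [h2, h3] with s hs2 hs3
  refine ⟨hs2, fun x => ?_⟩
  have hrow : ∀ i, 0 ≤ ∑ j, c i j := fun i => Finset.sum_nonneg fun j _ => (hc i j).le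
  rw [pi_norm_le_iff_of_nonneg (by have := Finset.sum_nonneg fun i (_ : i ∈ Finset.univ) => hrow i
                                   positivity)]
  intro i
  calc ‖(W' s).mulVec x i‖ = ‖∑ j, W' s i j * x j‖ := rfl
    _ ≤ ∑ j, ‖W' s i j * x j‖ := norm_sum_le _ _
    _ ≤ ∑ j, c i j * |s| * ‖x‖ := by
        refine Finset.sum_le_sum fun j _ => ?_
        rw [norm_mul]
        have := (hc i j).le
        exact mul_le_mul (hs3 i j) (norm_le_pi_norm x j) (norm_nonneg _) (by positivity)
    _ = (∑ j, c i j) * |s| * ‖x‖ := by simp only [Finset.sum_mul]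
    _ ≤ (∑ i, ∑ j, c i j) * |s| * ‖x‖ := by
        refine mul_le_mul_of_nonneg_right (mul_le_mul_of_nonneg_right ?_ (abs_nonneg _))
          (norm_nonneg _)
        exact Finset.single_le_sum (f := fun i => ∑ j, c i j) (fun i _ => hrow i)
          (Finset.mem_univ i)

/-- A function bounded near `0⁺` cannot have `r^m v(r)` tend to a nonzero limit when `m > 0`. -/
lemma not_bounded_of_tendsto {v : ℝ → E} {m : ℕ} (hm : m ≠ 0) {e : E} (he : e ≠ 0) {ε : ℝ}
    (hε : 0 < ε) (h : Tendsto (fun r : ℝ => r ^ m • v r) (𝓝[>] 0) (𝓝 e)) :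
    ¬ ∃ C : ℝ, ∀ r ∈ Ioo (0 : ℝ) ε, ‖v r‖ ≤ C := by
  rintro ⟨C, hC⟩
  refine he (tendsto_nhds_unique h ?_)
  have hp : Tendsto (fun r : ℝ => r ^ m * C) (𝓝[>] 0) (𝓝 0) := by
    have : Continuous fun r : ℝ => r ^ m * C := by fun_prop
    simpa [hm] using (this.tendsto 0).mono_left nhdsWithin_le_nhds
  refine squeeze_zero_norm' ?_ hp
  filter_upwards [Ioo_mem_nhdsGT hε] with r hr
  have := hr.1
  rw [norm_smul, Real.norm_of_nonneg (by positivity)]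
  exact mul_le_mul_of_nonneg_left (hC r hr) (by positivity)

end

end RadialSystem

/-! ### Existence of the singular solutions -/

/-- Existence of the two unbounded (singular) solutions `v⁽ⁱ⁾` of the coupled
two-channel radial Schrödinger equation
`v'' + (2/r)v' - (l(l+1)/r²)v + W(r)v = 0`,
behaving like `v⁽ⁱ⁾_j(r) ~ r^{-l-1} δ_{ij}` near `r = 0`, under the hypothesis
that `r² W(r)` extends to a function analytic at `0` vanishing at `0`. -/
theorem unbounded_solutions_two_channel_radial
    (l : ℕ) (W : ℝ → Matrix (Fin 2) (Fin 2) ℂ)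
    (W' : ℝ → Matrix (Fin 2) (Fin 2) ℂ)
    (hW'anal : ∀ i j : Fin 2, AnalyticAt ℝ (fun r : ℝ => W' r i j) 0)
    (hW'0 : W' 0 = 0)
    (hW'ext : ∀ r : ℝ, r ≠ 0 → W' r = (r ^ 2 : ℝ) • W r) :
    ∀ i : Fin 2, ∃ (ε : ℝ) (v : ℝ → (Fin 2 → ℂ)), 0 < ε ∧
      (∀ r ∈ Set.Ioo (0 : ℝ) ε,
        DifferentiableAt ℝ v r ∧
        DifferentiableAt ℝ (deriv v) r ∧
        deriv (deriv v) r + (2 / r) • deriv v r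
          - (((l : ℝ) * ((l : ℝ) + 1)) / r ^ 2) • v r
          + (W r).mulVec (v r) = 0) ∧
      (¬ ∃ C : ℝ, ∀ r ∈ Set.Ioo (0 : ℝ) ε, ‖v r‖ ≤ C) ∧
      Filter.Tendsto (fun r : ℝ => r ^ (l + 1) • v r)
        (nhdsWithin 0 (Set.Ioi 0)) (nhds (Pi.single i 1)) := by
  intro i
  obtain ⟨M, hM, hev⟩ := RadialSystem.exists_bound_near_zero hW'anal hW'0
  obtain ⟨δ, hδ, hball⟩ := Metric.eventually_nhds_iff.1 hev
  -- Small enough for the bounds near `0` to hold and for the contraction constant `ε * M` to be `< 1`.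
  obtain ⟨ε, hε, hεδ, hεM⟩ : ∃ ε : ℝ, 0 < ε ∧ ε < δ ∧ ε * M < 1 := by
    refine ⟨min (δ / 2) (1 / (M + 1)), by positivity, ?_, ?_⟩
    · exact (min_le_left _ _).trans_lt (by linarith)
    · refine (mul_le_mul_of_nonneg_right (min_le_right _ _) hM).trans_lt ?_
      rw [div_mul_eq_mul_div, div_lt_one (by positivity)]
      linarith
  have hnear : ∀ s ∈ Set.Ioc 0 ε, (∀ i j, ContinuousAt (fun r => W' r i j) s) ∧
      ∀ x : Fin 2 → ℂ, ‖(W' s).mulVec x‖ ≤ M * |s| * ‖x‖ := fun s hs => by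
    refine hball ?_
    rw [Real.dist_eq, sub_zero, abs_of_pos hs.1]
    exact hs.2.trans_lt hεδ
  let F : ℝ → (Fin 2 → ℂ) → (Fin 2 → ℂ) := fun s x => s⁻¹ • (W' s).mulVec x
  have hF0 : ∀ s, F s 0 = 0 := fun s => by simp [F]
  have hFlip : ∀ s ∈ Set.Ioc 0 ε, ∀ x z, ‖F s x - F s z‖ ≤ M * ‖x - z‖ := by
    intro s hs x z
    have hs0 : 0 < s := hs.1
    have h := (hnear s hs).2 (x - z)
    simp only [F]
    rw [← smul_sub, ← Matrix.mulVec_sub, norm_smul, norm_inv, Real.norm_of_nonneg hs0.le,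
      inv_mul_le_iff₀ hs0]
    rw [abs_of_pos hs0] at h
    linarith
  have hFc : ∀ y : ℝ → (Fin 2 → ℂ), Continuous y →
      ContinuousOn (fun s => F s (y s)) (Set.Ioc 0 ε) := by
    intro y hy s hs
    refine ContinuousAt.continuousWithinAt ?_
    refine (continuousAt_inv₀ hs.1.ne').smul (continuousAt_pi.2 fun i => ?_)
    simp only [Matrix.mulVec, dotProduct]
    refine tendsto_finsetSum _ fun j _ => ?_
    exact ((hnear s hs).1 i j).mul ((continuous_apply j).comp hy).continuousAt
  obtain ⟨y, hy⟩ := RadialSystem.exists_fixedPoint (2 * l) hε hM hεM F hF0 hFlip hFc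
    (Pi.single i 1)
  have hgb : ∀ s ∈ Set.Ioc 0 ε, ‖F s (y s)‖ ≤ M * ‖y‖ := fun s hs => by
    have h := hFlip s hs (y s) 0
    rw [hF0, sub_zero, sub_zero] at h
    exact h.trans (mul_le_mul_of_nonneg_left (y.norm_coe_le_norm s) hM)
  obtain ⟨y₁, hy₁⟩ := RadialSystem.hasDerivAt_solution_deriv (2 * l) (hFc y y.continuous) hgb
    _ hy
  have hy0 : y 0 = Pi.single i 1 := by
    rw [hy 0, intervalIntegral.integral_congr_ae (g := fun _ => 0)]
    · simp
    · refine MeasureTheory.ae_of_all _ fun s hs => ?_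
      rw [Set.uIoc_of_le hε.le] at hs
      simp [RadialSystem.kernel, min_eq_left hs.1.le]
  have hlim : Filter.Tendsto (fun r : ℝ => r ^ (l + 1) • ((r ^ (l + 1))⁻¹ • y r))
      (nhdsWithin 0 (Set.Ioi 0)) (nhds (Pi.single i 1)) := by
    rw [← hy0]
    refine ((y.continuous.tendsto 0).mono_left nhdsWithin_le_nhds).congr' ?_
    filter_upwards [self_mem_nhdsWithin] with r hr
    rw [smul_inv_smul₀ (pow_ne_zero _ (ne_of_gt hr))]
  refine ⟨ε, fun r => (r ^ (l + 1))⁻¹ • y r, hε, fun r hr => ?_, ?_, hlim⟩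
  · obtain ⟨hd, hdd, hode⟩ := RadialSystem.substitution_solves l (x := fun s => (W' s).mulVec (y s))
      (fun r hr => (hy₁ r hr).1) (fun r hr => (hy₁ r hr).2) hr
    refine ⟨hd, hdd, ?_⟩
    have hr0 : r ≠ 0 := hr.1.ne'
    have hW : W r = (r ^ 2)⁻¹ • W' r := by
      rw [hW'ext r hr0, inv_smul_smul₀ (pow_ne_zero _ hr0)]
    rw [hW, Matrix.smul_mulVec, Matrix.mulVec_smul, smul_comm (r ^ 2)⁻¹]
    exact hode
  · exact RadialSystem.not_bounded_of_tendsto (Nat.succ_ne_zero l) (by simp) hε hlim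
end
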